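/- arXiv:2001.11648 — 3 statements merged into one kernel-verified Lean document; each statement's English description precedes it below -/
import Mathlib

section
/- Strict improvement by raising IoT powers (step in the proof of Lemma 1): for every feasible point x ∈ F with P_pI + P_cI < P_tI and every δ with 0 < δ ≤ (P_tI − P_pI − P_cI)/2, the point x′ obtained from x by replacing P_pI with P_pI + δ and P_cI with P_cI + δ is feasible and satisfies T(x′) < T(x). -/
open Real

structure Pt where
  m : ℝ
  k : ℝ
  PpI : ℝ
  PcI : ℝ
  PpF : ℝ
  PcF : ℝ
  PpC : ℝ

/-- Feasibility of a point `x = (m, k, P_pI, P_cI, P_pF, P_cF, P_pC)`. -/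
def Feasible (B bI bF bC PtI PtF PtC : ℝ) (x : Pt) : Prop :=
  0 ≤ x.k ∧ x.k ≤ x.m ∧ x.m ≤ B ∧
  bI < x.PpI ∧ 0 < x.PcI ∧ x.PpI + x.PcI ≤ PtI ∧
  bF < x.PpF ∧ 0 < x.PcF ∧ x.PpF + x.PcF ≤ PtF ∧
  bC < x.PpC ∧ x.PpC ≤ PtC

/-- IoT-layer latency. -/
noncomputable def TIoT (B β cI aI bI : ℝ) (x : Pt) : ℝ :=
  cI * (B - x.m) * ((x.PpI - bI) / aI) ^ (-(1 / β))

/-- Fog-layer latency. -/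
noncomputable def TFog (β cF aF bF WIF g : ℝ) (x : Pt) : ℝ :=
  x.m / (WIF * Real.logb 2 (1 + g * x.PcI)) +
    cF * (x.m - x.k) * ((x.PpF - bF) / aF) ^ (-(1 / β))

/-- Cloud-layer latency. -/
noncomputable def TCloud (β cC aC bC WIF WFC g h : ℝ) (x : Pt) : ℝ :=
  x.m / (WIF * Real.logb 2 (1 + g * x.PcI)) +
    x.k / (WFC * Real.logb 2 (1 + h * x.PcF)) +
    cC * x.k * ((x.PpC - bC) / aC) ^ (-(1 / β))

/-- Total latency `T = max (T_I, T_F, T_C)`. -/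
noncomputable def Ttot (B β cI cF cC aI aF aC bI bF bC WIF WFC g h : ℝ) (x : Pt) : ℝ :=
  max (TIoT B β cI aI bI x) (max (TFog β cF aF bF WIF g x) (TCloud β cC aC bC WIF WFC g h x))

/-!
Raising `P_pI` speeds up each IoT compute cycle and raising `P_cI` increases the IoT-to-fog rate,
so `T_I` drops strictly when `m < B`, and `T_F` and `T_C` drop strictly when `0 < m`. If `m = 0`,
then also `k = 0`, so `T_F` and `T_C` vanish and `T_I > 0` alone is the maximum; if `m = B`, then
`T_I` vanishes while `T_F > 0`. So the maximum drops strictly in all cases.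
-/

/-- The compute time per unit of complexity-weighted load of a processor
with power `p`, under the power model with constants `a`, `b` and exponent `β`. -/
noncomputable def cycleTime (β a b p : ℝ) : ℝ :=
  ((p - b) / a) ^ (-(1 / β))

/-- The Shannon rate of a link of bandwidth `W` and normalized channel gain `g` at transmit power
`p`, in bits per unit of time. -/
noncomputable def shannonRate (W g p : ℝ) : ℝ :=
  W * Real.logb 2 (1 + g * p)

/-- The point obtained from `x` by setting the IoT compute and transmit powers to `p` and `q`. -/
def Pt.withIoTPowers (x : Pt) (p q : ℝ) : Pt :=
  { x with PpI := p, PcI := q }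

section Rates

variable {β a b p W g : ℝ}

lemma cycleTime_pos (ha : 0 < a) (hp : b < p) : 0 < cycleTime β a b p :=
  rpow_pos_of_pos (div_pos (sub_pos.2 hp) ha) _

lemma strictAntiOn_cycleTime (hβ : 0 < β) (ha : 0 < a) :
    StrictAntiOn (cycleTime β a b) (Set.Ioi b) := by
  intro p hp q _ hpq
  have hexp : -(1 / β) < 0 := neg_lt_zero.2 (one_div_pos.2 hβ)
  have hbase : 0 < (p - b) / a := div_pos (sub_pos.2 hp) ha
  exact rpow_lt_rpow_of_neg hbase (by gcongr) hexp

lemma strictMonoOn_shannonRate (hW : 0 < W) (hg : 0 < g) :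
    StrictMonoOn (shannonRate W g) (Set.Ici 0) := by
  intro p hp q _ hpq
  have hbase : 0 < 1 + g * p := add_pos_of_pos_of_nonneg one_pos (mul_nonneg hg.le hp)
  exact mul_lt_mul_of_pos_left (logb_lt_logb one_lt_two hbase (by gcongr)) hW

lemma shannonRate_pos (hW : 0 < W) (hg : 0 < g) (hp : 0 < p) : 0 < shannonRate W g p :=
  mul_pos hW (logb_pos one_lt_two (lt_add_of_pos_right 1 (mul_pos hg hp)))

lemma div_shannonRate_lt_div_shannonRate {m q : ℝ} (hm : 0 < m) (hW : 0 < W) (hg : 0 < g)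
    (hp : 0 < p) (hpq : p < q) : m / shannonRate W g q < m / shannonRate W g p :=
  div_lt_div_of_pos_left hm (shannonRate_pos hW hg hp)
    (strictMonoOn_shannonRate hW hg hp.le (hp.trans hpq).le hpq)

end Rates

section Latencies

variable {B β cI cF cC aI aF aC bI bF bC WIF WFC g h PtI PtF PtC p q : ℝ} {x : Pt}

lemma TIoT_eq_zero (hm : x.m = B) : TIoT B β cI aI bI x = 0 := by
  simp only [TIoT, hm, sub_self, mul_zero, zero_mul]

lemma TFog_eq_zero (hm : x.m = 0) (hk : x.k = 0) : TFog β cF aF bF WIF g x = 0 := by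
  simp only [TFog, hm, hk, zero_div, sub_self, mul_zero, zero_mul, add_zero]

lemma TCloud_eq_zero (hm : x.m = 0) (hk : x.k = 0) :
    TCloud β cC aC bC WIF WFC g h x = 0 := by
  simp only [TCloud, hm, hk, zero_div, mul_zero, zero_mul, add_zero]

lemma TIoT_pos (hcI : 0 < cI) (haI : 0 < aI) (hm : x.m < B) (hp : bI < x.PpI) :
    0 < TIoT B β cI aI bI x :=
  mul_pos (mul_pos hcI (sub_pos.2 hm)) (cycleTime_pos haI hp)

lemma TFog_pos (hcF : 0 ≤ cF) (haF : 0 < aF) (hWIF : 0 < WIF) (hg : 0 < g)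
    (hm : 0 < x.m) (hkm : x.k ≤ x.m) (hq : 0 < x.PcI) (hpF : bF < x.PpF) :
    0 < TFog β cF aF bF WIF g x :=
  add_pos_of_pos_of_nonneg (div_pos hm (shannonRate_pos hWIF hg hq))
    (mul_nonneg (mul_nonneg hcF (sub_nonneg.2 hkm)) (cycleTime_pos haF hpF).le)

lemma TIoT_withIoTPowers_lt (hβ : 0 < β) (hcI : 0 < cI) (haI : 0 < aI) (hm : x.m < B)
    (hPpI : bI < x.PpI) (hp : x.PpI < p) :
    TIoT B β cI aI bI (x.withIoTPowers p q) < TIoT B β cI aI bI x :=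
  mul_lt_mul_of_pos_left (strictAntiOn_cycleTime hβ haI hPpI (hPpI.trans hp) hp)
    (mul_pos hcI (sub_pos.2 hm))

lemma TFog_withIoTPowers_lt (hWIF : 0 < WIF) (hg : 0 < g) (hm : 0 < x.m)
    (hPcI : 0 < x.PcI) (hq : x.PcI < q) :
    TFog β cF aF bF WIF g (x.withIoTPowers p q) < TFog β cF aF bF WIF g x :=
  add_lt_add_left (div_shannonRate_lt_div_shannonRate hm hWIF hg hPcI hq) _

lemma TCloud_withIoTPowers_lt (hWIF : 0 < WIF) (hg : 0 < g) (hm : 0 < x.m)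
    (hPcI : 0 < x.PcI) (hq : x.PcI < q) :
    TCloud β cC aC bC WIF WFC g h (x.withIoTPowers p q) < TCloud β cC aC bC WIF WFC g h x :=
  add_lt_add_left
    (add_lt_add_left (div_shannonRate_lt_div_shannonRate hm hWIF hg hPcI hq) _) _

lemma Feasible.withIoTPowers (hx : Feasible B bI bF bC PtI PtF PtC x) (hp : bI < p) (hq : 0 < q)
    (hpq : p + q ≤ PtI) : Feasible B bI bF bC PtI PtF PtC (x.withIoTPowers p q) :=
  let ⟨hk, hkm, hmB, _, _, _, hFogCloud⟩ := hx
  ⟨hk, hkm, hmB, hp, hq, hpq, hFogCloud⟩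

lemma Ttot_withIoTPowers_lt (hB : 0 < B) (hβ : 0 < β) (hcI : 0 < cI) (hcF : 0 ≤ cF)
    (haI : 0 < aI) (haF : 0 < aF) (hWIF : 0 < WIF) (hg : 0 < g)
    (hx : Feasible B bI bF bC PtI PtF PtC x) (hp : x.PpI < p) (hq : x.PcI < q) :
    Ttot B β cI cF cC aI aF aC bI bF bC WIF WFC g h (x.withIoTPowers p q) <
      Ttot B β cI cF cC aI aF aC bI bF bC WIF WFC g h x := by
  obtain ⟨hk, hkm, hmB, hPpI, hPcI, -, hPpF, -⟩ := hx
  have hI (hm : x.m < B) :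
      TIoT B β cI aI bI (x.withIoTPowers p q) < TIoT B β cI aI bI x :=
    TIoT_withIoTPowers_lt hβ hcI haI hm hPpI hp
  have hFC (hm : 0 < x.m) :
      max (TFog β cF aF bF WIF g (x.withIoTPowers p q))
          (TCloud β cC aC bC WIF WFC g h (x.withIoTPowers p q)) <
        max (TFog β cF aF bF WIF g x) (TCloud β cC aC bC WIF WFC g h x) :=
    max_lt_max (TFog_withIoTPowers_lt hWIF hg hm hPcI hq)
      (TCloud_withIoTPowers_lt hWIF hg hm hPcI hq)
  rcases (hk.trans hkm).eq_or_lt' with hm | hm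
  · have hk0 : x.k = 0 := le_antisymm (hkm.trans_eq hm) hk
    have hmB' : x.m < B := hm.trans_lt hB
    have hpos : 0 < TIoT B β cI aI bI x := TIoT_pos hcI haI hmB' hPpI
    have hF : TFog β cF aF bF WIF g (x.withIoTPowers p q) = 0 := TFog_eq_zero hm hk0
    have hC : TCloud β cC aC bC WIF WFC g h (x.withIoTPowers p q) = 0 := TCloud_eq_zero hm hk0
    exact lt_max_of_lt_left (max_lt (hI hmB') (max_lt (hF.trans_lt hpos) (hC.trans_lt hpos)))
  rcases hmB.eq_or_lt with hmB' | hmB'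
  · have hpos : 0 < TFog β cF aF bF WIF g x := TFog_pos hcF haF hWIF hg hm hkm hPcI hPpF
    have hI0 : TIoT B β cI aI bI (x.withIoTPowers p q) = 0 := TIoT_eq_zero hmB'
    exact lt_max_of_lt_right (max_lt (hI0.trans_lt (lt_max_of_lt_left hpos)) (hFC hm))
  · exact max_lt_max (hI hmB') (hFC hm)

end Latencies

theorem strict_improvement_iot_powers_general
    {B β cI cF cC aI aF aC bI bF bC WIF WFC g h PtI PtF PtC p q : ℝ} {x : Pt}
    (hB : 0 < B) (hβ : 0 < β) (hcI : 0 < cI) (hcF : 0 ≤ cF)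
    (haI : 0 < aI) (haF : 0 < aF) (haC : 0 < aC)
    (hWIF : 0 < WIF) (hWFC : 0 < WFC) (hg : 0 < g) (hh : 0 < h)
    (hx : Feasible B bI bF bC PtI PtF PtC x)
    (hp : x.PpI < p) (hq : x.PcI < q) (hpq : p + q ≤ PtI) :
    Feasible B bI bF bC PtI PtF PtC (x.withIoTPowers p q) ∧
      Ttot B β cI cF cC aI aF aC bI bF bC WIF WFC g h (x.withIoTPowers p q) <
        Ttot B β cI cF cC aI aF aC bI bF bC WIF WFC g h x := by
  have ⟨_, _, _, hPpI, hPcI, _⟩ := hx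
  exact ⟨hx.withIoTPowers (hPpI.trans hp) (hPcI.trans hq) hpq,
    Ttot_withIoTPowers_lt hB hβ hcI hcF haI haF hWIF hg hx hp hq⟩

/-- Strict improvement by raising IoT powers (step in the proof of Lemma 1). -/
theorem strict_improvement_iot_powers
    (B β cI cF cC aI aF aC bI bF bC WIF WFC g h PtI PtF PtC : ℝ)
    (hB : 0 < B) (hβ : 0 < β)
    (hcI : 0 < cI) (hcF : 0 < cF) (hcC : 0 < cC)
    (haI : 0 < aI) (haF : 0 < aF) (haC : 0 < aC)
    (hbI : 0 ≤ bI) (hbF : 0 ≤ bF) (hbC : 0 ≤ bC)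
    (hWIF : 0 < WIF) (hWFC : 0 < WFC)
    (hg : 0 < g) (hh : 0 < h)
    (hPtI : bI < PtI) (hPtF : bF < PtF) (hPtC : bC < PtC)
    (x : Pt) (hx : Feasible B bI bF bC PtI PtF PtC x)
    (hlt : x.PpI + x.PcI < PtI)
    (δ : ℝ) (hδ0 : 0 < δ) (hδ : δ ≤ (PtI - x.PpI - x.PcI) / 2) :
    Feasible B bI bF bC PtI PtF PtC { x with PpI := x.PpI + δ, PcI := x.PcI + δ } ∧
    Ttot B β cI cF cC aI aF aC bI bF bC WIF WFC g h { x with PpI := x.PpI + δ, PcI := x.PcI + δ } < Ttot B β cI cF cC aI aF aC bI bF bC WIF WFC g h x :=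
  strict_improvement_iot_powers_general hB hβ hcI hcF.le haI haF haC hWIF hWFC hg hh hx
    (lt_add_of_pos_right _ hδ0) (lt_add_of_pos_right _ hδ0) (by linarith)
end

section
/- Improvement by raising fog powers (step in the proof of Lemma 1): for every x ∈ F with k > 0 and P_pF + P_cF < P_tF, and every δ with 0 < δ ≤ (P_tF − P_pF − P_cF)/2, the point x′ obtained from x by replacing P_pF with P_pF + δ and P_cF with P_cF + δ is feasible and satisfies T_I(x′) = T_I(x), T_F(x′) ≤ T_F(x) and T_C(x′) < T_C(x); consequently T(x′) ≤ T(x), and if moreover max(T_F(x), T_C(x)) > T_I(x), then T(x′) < T(x). -/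
/-!
A transmission time and a computing time are each strictly decreasing in the power spent on them, so
raising both fog powers never increases `T_F` and, as `k > 0`, strictly decreases `T_C`. When
`k = m` the fog computes nothing and `T_F` does not move; but then `T_F` is only the transmission
time that is also the first summand of `T_C`, so `T_F < T_C` and `T_F` does not attain the maximum.
Hence `max T_F T_C` drops strictly in every case, while `T_I` does not depend on the fog powers.
-/

open Real

/-- The time needed to send `s` bits with power `P` over a link of bandwidth `W` and normalized
channel gain `g`, at the Shannon rate `W * log₂ (1 + g * P)`. -/
noncomputable def transmissionTime (W g s P : ℝ) : ℝ :=
  s / (W * Real.logb 2 (1 + g * P))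

/-- The time needed to process `s` bits of complexity `c` with power `P`, when running at speed `v`
consumes the power `a * v ^ β + b`. -/
noncomputable def computingTime (β c a b s P : ℝ) : ℝ :=
  c * s * ((P - b) / a) ^ (-(1 / β))

section LatencyComponents

variable {W g β c a b s P : ℝ}

lemma rate_pos (hW : 0 < W) (hg : 0 < g) (hP : 0 < P) : 0 < W * Real.logb 2 (1 + g * P) :=
  mul_pos hW (Real.logb_pos one_lt_two (lt_add_of_pos_right 1 (mul_pos hg hP)))

lemma transmissionTime_pos (hW : 0 < W) (hg : 0 < g) (hs : 0 < s) (hP : 0 < P) :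
    0 < transmissionTime W g s P :=
  div_pos hs (rate_pos hW hg hP)

lemma transmissionTime_strictAntiOn (hW : 0 < W) (hg : 0 < g) (hs : 0 < s) :
    StrictAntiOn (transmissionTime W g s) (Set.Ioi 0) := by
  intro P (hP : 0 < P) Q _ hPQ
  have log_lt : Real.logb 2 (1 + g * P) < Real.logb 2 (1 + g * Q) :=
    Real.logb_lt_logb one_lt_two (by positivity) (by gcongr)
  exact div_lt_div_of_pos_left hs (rate_pos hW hg hP) (mul_lt_mul_of_pos_left log_lt hW)

lemma computingTime_pos (hc : 0 < c) (ha : 0 < a) (hs : 0 < s) (hP : b < P) :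
    0 < computingTime β c a b s P :=
  mul_pos (mul_pos hc hs) (Real.rpow_pos_of_pos (div_pos (sub_pos.2 hP) ha) _)

lemma computingTime_zero_workload : computingTime β c a b 0 P = 0 := by
  simp [computingTime]

lemma computingTime_strictAntiOn (hβ : 0 < β) (hc : 0 < c) (ha : 0 < a) (hs : 0 < s) :
    StrictAntiOn (computingTime β c a b s) (Set.Ioi b) := by
  intro P (hP : b < P) Q _ hPQ
  have exponent_neg : -(1 / β) < 0 := neg_lt_zero.2 (one_div_pos.2 hβ)
  have base_lt : (P - b) / a < (Q - b) / a := by gcongr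
  exact mul_lt_mul_of_pos_left
    (Real.rpow_lt_rpow_of_neg (div_pos (sub_pos.2 hP) ha) base_lt exponent_neg) (mul_pos hc hs)

lemma computingTime_antitoneOn (hβ : 0 < β) (hc : 0 < c) (ha : 0 < a) (hs : 0 ≤ s) :
    AntitoneOn (computingTime β c a b s) (Set.Ioi b) := by
  rcases hs.eq_or_lt with rfl | hs
  · simp only [AntitoneOn, computingTime_zero_workload, le_refl, implies_true]
  · exact (computingTime_strictAntiOn hβ hc ha hs).antitoneOn

end LatencyComponents

/-- The point `x` with its fog computing and transmission powers replaced by `p` and `q`. -/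
def Pt.withFogPowers (x : Pt) (p q : ℝ) : Pt :=
  { x with PpF := p, PcF := q }

section FogPowers

variable {B β cF cC aF aC bI bF bC WIF WFC g h PtI PtF PtC p q : ℝ} {x : Pt}

lemma Feasible.withFogPowers (hx : Feasible B bI bF bC PtI PtF PtC x)
    (hp : bF < p) (hq : 0 < q) (hpq : p + q ≤ PtF) :
    Feasible B bI bF bC PtI PtF PtC (x.withFogPowers p q) := by
  obtain ⟨hk, hkm, hmB, hPpI, hPcI, hPtI, -, -, -, hPpC, hPtC⟩ := hx
  exact ⟨hk, hkm, hmB, hPpI, hPcI, hPtI, hp, hq, hpq, hPpC, hPtC⟩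

lemma tFog_eq_transmissionTime_add_computingTime :
    TFog β cF aF bF WIF g x =
      transmissionTime WIF g x.m x.PcI + computingTime β cF aF bF (x.m - x.k) x.PpF :=
  rfl

lemma tCloud_eq_transmissionTime_add_computingTime :
    TCloud β cC aC bC WIF WFC g h x =
      transmissionTime WIF g x.m x.PcI + transmissionTime WFC h x.k x.PcF +
        computingTime β cC aC bC x.k x.PpC :=
  rfl

lemma tFog_withFogPowers_le (hβ : 0 < β) (hcF : 0 < cF) (haF : 0 < aF) (hkm : x.k ≤ x.m)
    (hPpF : bF < x.PpF) (hp : x.PpF ≤ p) :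
    TFog β cF aF bF WIF g (x.withFogPowers p q) ≤ TFog β cF aF bF WIF g x :=
  add_le_add_right
    (computingTime_antitoneOn hβ hcF haF (sub_nonneg.2 hkm) hPpF (hPpF.trans_le hp) hp) _

lemma tFog_withFogPowers_lt (hβ : 0 < β) (hcF : 0 < cF) (haF : 0 < aF) (hkm : x.k < x.m)
    (hPpF : bF < x.PpF) (hp : x.PpF < p) :
    TFog β cF aF bF WIF g (x.withFogPowers p q) < TFog β cF aF bF WIF g x :=
  add_lt_add_right
    (computingTime_strictAntiOn hβ hcF haF (sub_pos.2 hkm) hPpF (hPpF.trans hp) hp) _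

lemma tCloud_withFogPowers_lt (hWFC : 0 < WFC) (hh : 0 < h) (hk : 0 < x.k)
    (hPcF : 0 < x.PcF) (hq : x.PcF < q) :
    TCloud β cC aC bC WIF WFC g h (x.withFogPowers p q) < TCloud β cC aC bC WIF WFC g h x :=
  add_lt_add_left
    (add_lt_add_right (transmissionTime_strictAntiOn hWFC hh hk hPcF (hPcF.trans hq) hq) _) _

lemma tFog_lt_tCloud_of_k_eq_m (hcC : 0 < cC) (haC : 0 < aC) (hWFC : 0 < WFC) (hh : 0 < h)
    (hk : 0 < x.k) (hkm : x.k = x.m) (hPcF : 0 < x.PcF) (hPpC : bC < x.PpC) :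
    TFog β cF aF bF WIF g x < TCloud β cC aC bC WIF WFC g h x := by
  have send_pos : 0 < transmissionTime WFC h x.k x.PcF := transmissionTime_pos hWFC hh hk hPcF
  have cloud_pos : 0 < computingTime β cC aC bC x.k x.PpC := computingTime_pos hcC haC hk hPpC
  rw [tFog_eq_transmissionTime_add_computingTime, tCloud_eq_transmissionTime_add_computingTime,
    sub_eq_zero.2 hkm.symm, computingTime_zero_workload]
  linarith

lemma max_tFog_tCloud_withFogPowers_lt (hβ : 0 < β) (hcF : 0 < cF) (hcC : 0 < cC)
    (haF : 0 < aF) (haC : 0 < aC) (hWFC : 0 < WFC) (hh : 0 < h)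
    (hx : Feasible B bI bF bC PtI PtF PtC x) (hk : 0 < x.k) (hp : x.PpF < p) (hq : x.PcF < q) :
    max (TFog β cF aF bF WIF g (x.withFogPowers p q))
        (TCloud β cC aC bC WIF WFC g h (x.withFogPowers p q)) <
      max (TFog β cF aF bF WIF g x) (TCloud β cC aC bC WIF WFC g h x) := by
  obtain ⟨-, hkm, -, -, -, -, hPpF, hPcF, -, hPpC, -⟩ := hx
  refine max_lt ?_ (lt_max_of_lt_right (tCloud_withFogPowers_lt hWFC hh hk hPcF hq))
  rcases hkm.lt_or_eq with hkm_lt | hkm_eq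
  · exact lt_max_of_lt_left (tFog_withFogPowers_lt hβ hcF haF hkm_lt hPpF hp)
  · exact lt_max_of_lt_right <|
      (tFog_withFogPowers_le hβ hcF haF hkm hPpF hp.le).trans_lt
        (tFog_lt_tCloud_of_k_eq_m hcC haC hWFC hh hk hkm_eq hPcF hPpC)

end FogPowers

/-- Improvement by raising fog powers (step in the proof of Lemma 1). -/
theorem improvement_fog_powers
    (B β cI cF cC aI aF aC bI bF bC WIF WFC g h PtI PtF PtC : ℝ)
    (hB : 0 < B) (hβ : 0 < β)
    (hcI : 0 < cI) (hcF : 0 < cF) (hcC : 0 < cC)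
    (haI : 0 < aI) (haF : 0 < aF) (haC : 0 < aC)
    (hbI : 0 ≤ bI) (hbF : 0 ≤ bF) (hbC : 0 ≤ bC)
    (hWIF : 0 < WIF) (hWFC : 0 < WFC)
    (hg : 0 < g) (hh : 0 < h)
    (hPtI : bI < PtI) (hPtF : bF < PtF) (hPtC : bC < PtC)
    (x : Pt) (hx : Feasible B bI bF bC PtI PtF PtC x)
    (hk : 0 < x.k)
    (hlt : x.PpF + x.PcF < PtF)
    (δ : ℝ) (hδ0 : 0 < δ) (hδ : δ ≤ (PtF - x.PpF - x.PcF) / 2) :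
    Feasible B bI bF bC PtI PtF PtC { x with PpF := x.PpF + δ, PcF := x.PcF + δ } ∧
    TIoT B β cI aI bI { x with PpF := x.PpF + δ, PcF := x.PcF + δ } = TIoT B β cI aI bI x ∧
    TFog β cF aF bF WIF g { x with PpF := x.PpF + δ, PcF := x.PcF + δ } ≤ TFog β cF aF bF WIF g x ∧
    TCloud β cC aC bC WIF WFC g h { x with PpF := x.PpF + δ, PcF := x.PcF + δ } < TCloud β cC aC bC WIF WFC g h x ∧
    Ttot B β cI cF cC aI aF aC bI bF bC WIF WFC g h { x with PpF := x.PpF + δ, PcF := x.PcF + δ } ≤ Ttot B β cI cF cC aI aF aC bI bF bC WIF WFC g h x ∧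
    (TIoT B β cI aI bI x < max (TFog β cF aF bF WIF g x) (TCloud β cC aC bC WIF WFC g h x) →
      Ttot B β cI cF cC aI aF aC bI bF bC WIF WFC g h { x with PpF := x.PpF + δ, PcF := x.PcF + δ } < Ttot B β cI cF cC aI aF aC bI bF bC WIF WFC g h x) := by
  have ⟨_, hkm, _, _, _, _, hPpF, hPcF, _⟩ := hx
  have hp : x.PpF < x.PpF + δ := lt_add_of_pos_right _ hδ0
  have hq : x.PcF < x.PcF + δ := lt_add_of_pos_right _ hδ0
  have budget : (x.PpF + δ) + (x.PcF + δ) ≤ PtF := by linarith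
  have max_decreases := max_tFog_tCloud_withFogPowers_lt (WIF := WIF) (g := g)
    hβ hcF hcC haF haC hWFC hh hx hk hp hq
  exact ⟨hx.withFogPowers (hPpF.trans hp) (hPcF.trans hq) budget, rfl,
    tFog_withFogPowers_le hβ hcF haF hkm hPpF hp.le,
    tCloud_withFogPowers_lt hWFC hh hk hPcF hq,
    max_le_max_left _ max_decreases.le,
    fun hI => max_lt_max_right_iff.2 ⟨max_decreases, hI⟩⟩
end

section
/- Closed form of the stage-1 subproblem at a fixed power split (iteration 1): let α ∈ (0, 1 − b_I/P_tI), and set A = c_I·B·(((1 − α)·P_tI − b_I)/a_I)^(−1/β) and C = 1/(W_IF·log₂(1 + α·g·P_tI)) + c_F·((P_tF − b_F)/a_F)^(−1/β). Then for every m with 0 ≤ m ≤ B, max( c_I·(B − m)·(((1 − α)·P_tI − b_I)/a_I)^(−1/β), C·m ) ≥ A·C·B/(A + C·B), with equality if and only if m = A·B/(A + C·B); moreover this unique minimizer satisfies 0 < A·B/(A + C·B) < B, i.e. it is strictly optimal to offload some but not all of the bits. -/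
open Real

/-!
At a fixed power split the local latency is a strictly decreasing affine function of the offloaded
amount `m`, and the offloading latency is a strictly increasing linear one. Their maximum is
therefore minimized exactly where they cross. Both latencies per bit are positive, so the crossing
point divides the workload into two positive parts.
-/

section Crossing

variable {X Y : Type*} [LinearOrder X] [LinearOrder Y] {f g : X → Y} {x₀ : X} {v : Y}

lemma le_max_of_antitone_of_monotone (hf : Antitone f) (hg : Monotone g)
    (hfv : v ≤ f x₀) (hgv : v ≤ g x₀) (x : X) : v ≤ max (f x) (g x) := by
  rcases le_total x x₀ with hx | hx
  · exact le_max_of_le_left (hfv.trans (hf hx))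
  · exact le_max_of_le_right (hgv.trans (hg hx))

lemma lt_max_of_strictAnti_of_strictMono (hf : StrictAnti f) (hg : StrictMono g)
    (hfv : v ≤ f x₀) (hgv : v ≤ g x₀) {x : X} (hx : x ≠ x₀) : v < max (f x) (g x) := by
  rcases lt_or_gt_of_ne hx with hx | hx
  · exact lt_max_of_lt_left (hfv.trans_lt (hf hx))
  · exact lt_max_of_lt_right (hgv.trans_lt (hg hx))

lemma max_eq_iff_of_strictAnti_of_strictMono (hf : StrictAnti f) (hg : StrictMono g)
    (hfv : f x₀ = v) (hgv : g x₀ = v) (x : X) : max (f x) (g x) = v ↔ x = x₀ := by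
  refine ⟨fun hx ↦ ?_, fun hx ↦ by rw [hx, hfv, hgv, max_self]⟩
  by_contra hne
  exact (lt_max_of_strictAnti_of_strictMono hf hg hfv.ge hgv.ge hne).ne' hx

end Crossing

/-- The latency of a workload `B` shared by two layers working in parallel: `B - m` bits are kept,
at latency `k` per bit, and `m` bits are offloaded, at latency `c` per bit. -/
def splitLatency {K : Type*} [Field K] [LinearOrder K] (k c B m : K) : K :=
  max (k * (B - m)) (c * m)

/-- The offloaded amount for which keeping and offloading take equally long, when a workload `B` is
shared at latencies `k` (kept) and `c` (offloaded) per bit. It is the minimizer of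
`splitLatency k c B`. -/
def balancedLoad {K : Type*} [Field K] (k c B : K) : K :=
  k * B / (k + c)

lemma mul_sub_balancedLoad {K : Type*} [Field K] {k c : K} (hkc : k + c ≠ 0) (B : K) :
    k * (B - balancedLoad k c B) = c * balancedLoad k c B := by
  unfold balancedLoad
  field_simp
  ring

section SplitLatency

variable {K : Type*} [Field K] [LinearOrder K] [IsStrictOrderedRing K] {k c B : K}

lemma balancedLoad_pos (hk : 0 < k) (hc : 0 < c) (hB : 0 < B) : 0 < balancedLoad k c B :=
  div_pos (mul_pos hk hB) (add_pos hk hc)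

lemma balancedLoad_lt (hk : 0 < k) (hc : 0 < c) (hB : 0 < B) : balancedLoad k c B < B := by
  rw [balancedLoad, div_lt_iff₀ (add_pos hk hc), mul_comm k B]
  gcongr
  exact lt_add_of_pos_right k hc

lemma mul_balancedLoad_le_splitLatency (hk : 0 ≤ k) (hc : 0 ≤ c) (hkc : k + c ≠ 0) (B m : K) :
    c * balancedLoad k c B ≤ splitLatency k c B m :=
  le_max_of_antitone_of_monotone (f := fun m ↦ k * (B - m)) (g := fun m ↦ c * m)
    (fun _ _ h ↦ mul_le_mul_of_nonneg_left (sub_le_sub_left h B) hk)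
    (fun _ _ h ↦ mul_le_mul_of_nonneg_left h hc)
    (mul_sub_balancedLoad hkc B).ge le_rfl m

lemma splitLatency_eq_mul_balancedLoad_iff (hk : 0 < k) (hc : 0 < c) (B m : K) :
    splitLatency k c B m = c * balancedLoad k c B ↔ m = balancedLoad k c B :=
  max_eq_iff_of_strictAnti_of_strictMono (f := fun m ↦ k * (B - m)) (g := fun m ↦ c * m)
    (fun _ _ h ↦ mul_lt_mul_of_pos_left (sub_lt_sub_left h B) hk)
    (fun _ _ h ↦ mul_lt_mul_of_pos_left h hc)
    (mul_sub_balancedLoad (add_pos hk hc).ne' B) rfl m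

lemma lt_one_sub_mul_of_lt_one_sub_div {a b P : K} (hP : 0 < P) (ha : a < 1 - b / P) :
    b < (1 - a) * P :=
  (div_lt_iff₀ hP).1 (lt_sub_comm.1 ha)

end SplitLatency

lemma one_div_mul_logb_two_one_add_pos {w s : ℝ} (hw : 0 < w) (hs : 0 < s) :
    0 < 1 / (w * logb 2 (1 + s)) :=
  one_div_pos.2 (mul_pos hw (logb_pos one_lt_two (lt_add_of_pos_right 1 hs)))

theorem stage1_closed_form_general
    (B cI cF aI aF bI bF WIF g PtI PtF pI pF : ℝ)
    (hB : 0 < B) (hcI : 0 < cI) (hcF : 0 < cF) (haI : 0 < aI) (haF : 0 < aF)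
    (hWIF : 0 < WIF) (hg : 0 < g) (hPtI : 0 < PtI) (hPtF : bF < PtF)
    (α : ℝ) (hα : α ∈ Set.Ioo 0 (1 - bI / PtI))
    (A C : ℝ)
    (hA : A = cI * B * (((1 - α) * PtI - bI) / aI) ^ pI)
    (hC : C = 1 / (WIF * logb 2 (1 + α * g * PtI)) + cF * ((PtF - bF) / aF) ^ pF) :
    (∀ m : ℝ,
      A * C * B / (A + C * B) ≤
        max (cI * (B - m) * (((1 - α) * PtI - bI) / aI) ^ pI) (C * m) ∧
      (max (cI * (B - m) * (((1 - α) * PtI - bI) / aI) ^ pI) (C * m) =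
          A * C * B / (A + C * B) ↔ m = A * B / (A + C * B))) ∧
    0 < A * B / (A + C * B) ∧ A * B / (A + C * B) < B := by
  set k := cI * (((1 - α) * PtI - bI) / aI) ^ pI with hk_def
  have hk : 0 < k := mul_pos hcI <| rpow_pos_of_pos
    (div_pos (sub_pos.2 (lt_one_sub_mul_of_lt_one_sub_div hPtI hα.2)) haI) pI
  have hC_pos : 0 < C := hC ▸ add_pos
    (one_div_mul_logb_two_one_add_pos hWIF (mul_pos (mul_pos hα.1 hg) hPtI))
    (mul_pos hcF (rpow_pos_of_pos (div_pos (sub_pos.2 hPtF) haF) pF))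
  have hAk : A = k * B := by rw [hA, hk_def, mul_right_comm]
  have hload : A * B / (A + C * B) = balancedLoad k C B := by
    rw [hAk, ← add_mul, mul_div_mul_right _ _ hB.ne', balancedLoad]
  have hvalue : A * C * B / (A + C * B) = C * balancedLoad k C B := by
    rw [← hload, mul_comm A C, mul_assoc, mul_div_assoc]
  have hlatency (m : ℝ) : max (cI * (B - m) * (((1 - α) * PtI - bI) / aI) ^ pI) (C * m) =
      splitLatency k C B m := by
    rw [splitLatency, hk_def, mul_right_comm]
  simp only [hload, hvalue, hlatency]
  exact ⟨fun m ↦ ⟨mul_balancedLoad_le_splitLatency hk.le hC_pos.le (add_pos hk hC_pos).ne' B m,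
      splitLatency_eq_mul_balancedLoad_iff hk hC_pos B m⟩,
    balancedLoad_pos hk hC_pos hB, balancedLoad_lt hk hC_pos hB⟩

/-- Closed form of the stage-1 subproblem at a fixed power split (iteration 1). -/
theorem stage1_closed_form
    (B β cI cF aI aF bI bF WIF g PtI PtF : ℝ)
    (hB : 0 < B) (hβ : 0 < β)
    (hcI : 0 < cI) (hcF : 0 < cF)
    (haI : 0 < aI) (haF : 0 < aF)
    (hbI : 0 ≤ bI) (hbF : 0 ≤ bF)
    (hWIF : 0 < WIF) (hg : 0 < g)
    (hPtI : bI < PtI) (hPtF : bF < PtF)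
    (α : ℝ) (hα : α ∈ Set.Ioo 0 (1 - bI / PtI))
    (A C : ℝ)
    (hA : A = cI * B * (((1 - α) * PtI - bI) / aI) ^ (-(1 / β)))
    (hC : C = 1 / (WIF * Real.logb 2 (1 + α * g * PtI)) +
      cF * ((PtF - bF) / aF) ^ (-(1 / β))) :
    (∀ m : ℝ, 0 ≤ m → m ≤ B →
      A * C * B / (A + C * B) ≤
        max (cI * (B - m) * (((1 - α) * PtI - bI) / aI) ^ (-(1 / β))) (C * m) ∧
      (max (cI * (B - m) * (((1 - α) * PtI - bI) / aI) ^ (-(1 / β))) (C * m) =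
          A * C * B / (A + C * B) ↔ m = A * B / (A + C * B))) ∧
    0 < A * B / (A + C * B) ∧ A * B / (A + C * B) < B := by
  obtain ⟨hmin, hsplit⟩ := stage1_closed_form_general B cI cF aI aF bI bF WIF g PtI PtF _ _
    hB hcI hcF haI haF hWIF hg (hbI.trans_lt hPtI) hPtF α hα A C hA hC
  exact ⟨fun m _ _ ↦ hmin m, hsplit⟩
end
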